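/- A coideal H on FIN_k^∞ is semiselective if and only if the partial order (H, ≤*) is σ-distributive: the intersection of countably many ≤*-dense open subsets of H is ≤*-dense. -/

import Mathlib

/-!
Semiselectivity gives σ-distributivity by diagonalizing the dense open sets attached to a
condensation `a` through the single set `D n`, `n` the length of `a`: if `B` diagonalizes `As`,
then `B ∈ [r_n(B), B] ⊆ [r_n(B), As]`, so `B ≤ As ∈ D n`.

Conversely, there are only countably many finite condensations `a` of `A`, so σ-distributivity
yields a single `B₀ ∈ H` almost below some `As a ∈ D a` for every `a`. An element of `[B₀]` whose
support lies beyond a threshold depending on `a` belongs to `[As a]`, and only finitely many `a`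
live on a given initial segment of `ℕ`. It therefore suffices to find `B ≤ B₀` in `H` whose
blocks are separated by sufficiently large gaps. This follows from A4, applied to the parity of
the number of short gaps in the support of a vector: parity is additive on pairs of vectors that
are far apart, so the homogeneous colour is even parity, and then no two consecutive blocks of `B`
can be close, since joining them would create exactly one new short gap.
-/

open scoped symmDiff

namespace FINkSpace

/-- The support of `p : ℕ → ℕ`. -/
def supp (p : ℕ → ℕ) : Set ℕ := {n | p n ≠ 0}

/-- `p` is an element of `FIN_k`: values at most `k`, finite support, `k` attained. -/
def IsFINk (k : ℕ) (p : ℕ → ℕ) : Prop :=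
  (∀ n, p n ≤ k) ∧ (supp p).Finite ∧ ∃ n, p n = k

/-- The tetris operation `T(p)(n) = max (p n - 1) 0` (truncated subtraction). -/
def tetris (p : ℕ → ℕ) : ℕ → ℕ := fun n => p n - 1

/-- `A` is an infinite block sequence of elements of `FIN_k`. -/
def IsBlockSeq (k : ℕ) (A : ℕ → ℕ → ℕ) : Prop :=
  (∀ n, IsFINk k (A n)) ∧ ∀ n i j, A n i ≠ 0 → A (n + 1) j ≠ 0 → i < j

/-- `p` belongs to the combinatorial span `[B]`:
`p = T^{(i₀)}(B n₀) + ⋯ + T^{(i_l)}(B n_l)` with `n₀ < ⋯ < n_l` and some `i_j = 0`.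
Note `T^{(i)}(q) m = q m - i` (truncated subtraction). -/
def InSpan (k : ℕ) (B : ℕ → ℕ → ℕ) (p : ℕ → ℕ) : Prop :=
  ∃ (l : ℕ) (n : Fin (l + 1) → ℕ) (i : Fin (l + 1) → ℕ),
    StrictMono n ∧ (∀ j, i j ≤ k) ∧ (∃ j, i j = 0) ∧
    p = fun m => ∑ j, (B (n j) m - i j)

/-- `A ≤ B` : `A` is a condensation of `B` (every term of `A` lies in `[B]`). -/
def Cond (k : ℕ) (A B : ℕ → ℕ → ℕ) : Prop := ∀ n, InSpan k B (A n)

/-- `A ≤* B` : all but finitely many terms of `A` lie in `[B]`. -/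
def AlmostCond (k : ℕ) (A B : ℕ → ℕ → ℕ) : Prop := ∃ N, ∀ n, N ≤ n → InSpan k B (A n)

/-- `a` is a finite block sequence of elements of `FIN_k`. -/
def IsFinBlockSeq (k : ℕ) (a : List (ℕ → ℕ)) : Prop :=
  (∀ p ∈ a, IsFINk k p) ∧
  ∀ m, m + 1 < a.length → ∀ i j,
    (a.getD m fun _ => 0) i ≠ 0 → (a.getD (m + 1) fun _ => 0) j ≠ 0 → i < j

/-- `p` belongs to the span of the finite block sequence `a`. -/
def InSpanList (k : ℕ) (a : List (ℕ → ℕ)) (p : ℕ → ℕ) : Prop :=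
  ∃ (l : ℕ) (n : Fin (l + 1) → ℕ) (i : Fin (l + 1) → ℕ),
    StrictMono n ∧ (∀ j, n j < a.length) ∧ (∀ j, i j ≤ k) ∧ (∃ j, i j = 0) ∧
    p = fun m => ∑ j, ((a.getD (n j) fun _ => 0) m - i j)

/-- `rList n A` is the finite block sequence of the first `n` blocks of `A`. -/
def rList (n : ℕ) (A : ℕ → ℕ → ℕ) : List (ℕ → ℕ) := (List.range n).map A

/-- `b ≤_fin a` : every term of the finite block sequence `b` lies in the span of `a`. -/
def LeFin (k : ℕ) (b a : List (ℕ → ℕ)) : Prop :=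
  IsFinBlockSeq k b ∧ ∀ p ∈ b, InSpanList k a p

/-- The Ellentuck-type basic set `[a,A]`. -/
def Basic (k : ℕ) (a : List (ℕ → ℕ)) (A : ℕ → ℕ → ℕ) : Set (ℕ → ℕ → ℕ) :=
  {B | IsBlockSeq k B ∧ rList a.length B = a ∧ Cond k B A}

/-- `depth_A(a)` : the least `n` with `a ≤_fin r_n(A)`. -/
noncomputable def depth (k : ℕ) (A : ℕ → ℕ → ℕ) (a : List (ℕ → ℕ)) : ℕ :=
  sInf {n | ∀ p ∈ a, InSpanList k (rList n A) p}

/-- `a ∈ FIN_k^{<∞} ↾ A` : `a` is a finite block sequence all whose terms lie in `[A]`. -/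
def FinCond (k : ℕ) (a : List (ℕ → ℕ)) (A : ℕ → ℕ → ℕ) : Prop :=
  IsFinBlockSeq k a ∧ ∀ p ∈ a, InSpan k A p

end FINkSpace

namespace FINkSpace

/-- A coideal on `FIN_k^∞` (Definition of coideal in the paper). -/
structure Coideal (k : ℕ) where
  mem : (ℕ → ℕ → ℕ) → Prop
  blockseq : ∀ A, mem A → IsBlockSeq k A
  finiteChanges : ∀ A B, mem A → IsBlockSeq k B → (Set.range A ∆ Set.range B).Finite → mem B
  upward : ∀ A B, mem A → IsBlockSeq k B → Cond k A B → mem B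
  a3_1 : ∀ A, mem A → ∀ a, FinCond k a A →
    ∀ B, mem B → B ∈ Basic k (rList (depth k A a) A) A → (Basic k a B).Nonempty
  a3_2 : ∀ A, mem A → ∀ a, FinCond k a A →
    ∀ B, mem B → Cond k B A → (Basic k a B).Nonempty →
      ∃ A', mem A' ∧ A' ∈ Basic k (rList (depth k A a) A) A ∧
        (Basic k a A').Nonempty ∧ Basic k a A' ⊆ Basic k a B
  a4 : ∀ A, mem A → ∀ a, FinCond k a A → ∀ O : Set (List (ℕ → ℕ)),
    ∃ B, mem B ∧ B ∈ Basic k (rList (depth k A a) A) A ∧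
      ({b | ∃ C ∈ Basic k a B, b = rList (a.length + 1) C} ⊆ O ∨
       {b | ∃ C ∈ Basic k a B, b = rList (a.length + 1) C} ∩ O = ∅)

/-- `D` is dense open in `S` (with respect to the condensation order). -/
def DenseOpenIn (k : ℕ) (D S : Set (ℕ → ℕ → ℕ)) : Prop :=
  D ⊆ S ∧ (∀ A ∈ S, ∃ B ∈ D, Cond k B A) ∧
  ∀ A B, A ∈ S → B ∈ D → Cond k A B → A ∈ D

/-- `H` is a selective coideal. -/
def Selective (k : ℕ) (H : Coideal k) : Prop :=
  ∀ a A, H.mem A → (Basic k a A).Nonempty →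
    ∀ As : ℕ → ℕ → ℕ → ℕ,
      (∀ n, H.mem (As n) ∧ Cond k (As n) A ∧ Cond k (As (n + 1)) (As n) ∧
        (Basic k a (As n)).Nonempty) →
      ∃ B, H.mem B ∧ B ∈ Basic k a A ∧
        ∀ b, FinCond k b B → Basic k b B ⊆ Basic k b (As (depth k A b))

/-- `H` is a semiselective coideal. -/
def Semiselective (k : ℕ) (H : Coideal k) : Prop :=
  ∀ A, H.mem A →
    ∀ D : List (ℕ → ℕ) → Set (ℕ → ℕ → ℕ),
      (∀ a, FinCond k a A →
        DenseOpenIn k (D a) ({B | H.mem B} ∩ Basic k (rList (depth k A a) A) A)) →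
      ∀ C, H.mem C → Cond k C A →
        ∃ B, H.mem B ∧ Cond k B C ∧
          ∃ As : List (ℕ → ℕ) → ℕ → ℕ → ℕ,
            (∀ a, FinCond k a A → As a ∈ D a) ∧
            ∀ a, FinCond k a B → Basic k a B ⊆ Basic k a (As a)

end FINkSpace

namespace FINkSpace

/-- `D` is `≤*`-dense open in the coideal `H`. -/
def StarDenseOpen (k : ℕ) (H : Coideal k) (D : Set (ℕ → ℕ → ℕ)) : Prop :=
  D ⊆ {A | H.mem A} ∧ (∀ A, H.mem A → ∃ B ∈ D, AlmostCond k B A) ∧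
  ∀ A B, H.mem A → B ∈ D → AlmostCond k A B → A ∈ D

variable {k : ℕ} {A B C : ℕ → ℕ → ℕ} {p : ℕ → ℕ}

/-! ### Block sequences -/

lemma supp_add (p q : ℕ → ℕ) : supp (p + q) = supp p ∪ supp q := by
  ext n
  simp only [supp, Pi.add_apply, Set.mem_ofPred_eq, Set.mem_union]
  omega

/-- `A` is `f`-sparse: every point of the support of a block of `A` is mapped by `f` strictly
before the supports of all later blocks. -/
def IsSparse (f : ℕ → ℕ) (A : ℕ → ℕ → ℕ) : Prop :=
  ∀ m n, m < n → ∀ x y, A m x ≠ 0 → A n y ≠ 0 → f x < y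

lemma IsBlockSeq.apply_le (hA : IsBlockSeq k A) (n m : ℕ) : A n m ≤ k := (hA.1 n).1 m

lemma IsBlockSeq.isSparse_id (hA : IsBlockSeq k A) : IsSparse id A := by
  intro m n hmn
  induction n, hmn using Nat.le_induction with
  | base => exact hA.2 m
  | succ n _ ih =>
    intro x y hx hy
    obtain ⟨z, hz⟩ := (hA.1 n).2.2
    have hz0 : A n z ≠ 0 := by have := hA.apply_le m x; omega
    exact (ih x z hx hz0).trans (hA.2 n z y hz0 hy)

lemma IsBlockSeq.lt_of_ne_zero (hA : IsBlockSeq k A) {m n x y : ℕ} (hmn : m < n)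
    (hx : A m x ≠ 0) (hy : A n y ≠ 0) : x < y :=
  hA.isSparse_id m n hmn x y hx hy

lemma IsBlockSeq.index_unique (hA : IsBlockSeq k A) {m n x : ℕ} (hm : A m x ≠ 0)
    (hn : A n x ≠ 0) : m = n := by
  by_contra hmn
  rcases Nat.lt_or_gt_of_ne hmn with h | h
  · exact (hA.lt_of_ne_zero h hm hn).false
  · exact (hA.lt_of_ne_zero h hn hm).false

lemma IsBlockSeq.le_of_ne_zero (hA : IsBlockSeq k A) {n x : ℕ} (hx : A n x ≠ 0) : n ≤ x := by
  induction n generalizing x with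
  | zero => exact Nat.zero_le x
  | succ n ih =>
    obtain ⟨z, hz⟩ := (hA.1 n).2.2
    have hz0 : A n z ≠ 0 := by have := hA.apply_le (n + 1) x; omega
    exact (ih hz0).trans_lt (hA.2 n z x hz0 hx)

lemma IsBlockSeq.isSparse_of_succ (hA : IsBlockSeq k A) {f : ℕ → ℕ}
    (h : ∀ n x y, A n x ≠ 0 → A (n + 1) y ≠ 0 → f x < y) : IsSparse f A := by
  intro m n hmn x y hx hy
  rcases Nat.eq_or_lt_of_le hmn with rfl | hlt
  · exact h m x y hx hy
  · obtain ⟨z, hz⟩ := (hA.1 (m + 1)).2.2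
    have hz0 : A (m + 1) z ≠ 0 := by have := hA.apply_le m x; omega
    exact (h m x z hx hz0).trans (hA.lt_of_ne_zero hlt hz0 hy)

lemma IsBlockSeq.shift (hA : IsBlockSeq k A) (N : ℕ) : IsBlockSeq k fun n => A (n + N) :=
  ⟨fun n => hA.1 (n + N), fun _ _ _ hi hj => hA.lt_of_ne_zero (by omega) hi hj⟩

lemma IsFINk.exists_isGreatest (hp : IsFINk k p) {x : ℕ} (hx : p x ≠ 0) :
    ∃ m, IsGreatest (supp p) m :=
  hp.2.1.bddAbove.exists_isGreatest_of_nonempty ⟨x, hx⟩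

/-! ### Combinatorial spans -/

/-- The vector `p` is the sum `∑ T^{(e n)}(B n)` over all `n` with `e n < k`, finitely many, and
`e n = 0` for some `n`. The sum is described pointwise, using that the blocks of `B` have disjoint
supports, and `e n = k` encodes that `B n` does not occur. -/
structure IsExpansion (k : ℕ) (B : ℕ → ℕ → ℕ) (e p : ℕ → ℕ) : Prop where
  finite : {n | e n < k}.Finite
  exists_eq_zero : ∃ n, e n = 0
  eq_sub : ∀ n m, B n m ≠ 0 → p m = B n m - e n
  exists_ne_zero : ∀ m, p m ≠ 0 → ∃ n, B n m ≠ 0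

lemma inSpan_sum (s : Finset ℕ) {e : ℕ → ℕ} (he : ∀ n ∈ s, e n ≤ k) (h0 : ∃ n ∈ s, e n = 0) :
    InSpan k B fun m => ∑ n ∈ s, (B n m - e n) := by
  obtain ⟨n₀, hn₀, hen₀⟩ := h0
  obtain ⟨l, hl⟩ := Nat.exists_eq_succ_of_ne_zero (Finset.card_ne_zero_of_mem hn₀)
  have hrange : n₀ ∈ Set.range (s.orderEmbOfFin hl) := by rwa [Finset.range_orderEmbOfFin]
  obtain ⟨j₀, rfl⟩ := hrange
  refine ⟨l, s.orderEmbOfFin hl, e ∘ s.orderEmbOfFin hl, (s.orderEmbOfFin hl).strictMono,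
    fun j => he _ (s.orderEmbOfFin_mem hl j), ⟨j₀, hen₀⟩, ?_⟩
  funext m
  conv_lhs => rw [← Finset.map_orderEmbOfFin_univ s hl, Finset.sum_map]
  rfl

lemma inSpan_self (k : ℕ) (B : ℕ → ℕ → ℕ) (n : ℕ) : InSpan k B (B n) := by
  simpa using inSpan_sum (k := k) (B := B) {n} (e := fun _ => 0) (by simp) (by simp)

lemma inSpan_add (k : ℕ) (B : ℕ → ℕ → ℕ) {m n : ℕ} (hmn : m ≠ n) :
    InSpan k B (B m + B n) := by
  simpa [Finset.sum_pair hmn, ← Pi.add_def] using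
    inSpan_sum (k := k) (B := B) {m, n} (e := fun _ => 0) (by simp) (by simp)

lemma InSpan.exists_isExpansion (hB : IsBlockSeq k B) (hp : InSpan k B p) :
    ∃ e, IsExpansion k B e p := by
  obtain ⟨l, n, i, hn, -, ⟨j₀, hj₀⟩, rfl⟩ := hp
  have hval : ∀ N m, B N m ≠ 0 →
      ∑ j, (B (n j) m - i j) = B N m - Function.extend n i (fun _ => k) N := by
    intro N m hm
    have hother : ∀ j, n j ≠ N → B (n j) m - i j = 0 := fun j hj => by
      have : B (n j) m = 0 := by_contra fun hc => hj (hB.index_unique hc hm)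
      omega
    by_cases hN : ∃ j, n j = N
    · obtain ⟨j, rfl⟩ := hN
      rw [hn.injective.extend_apply]
      exact Finset.sum_eq_single j (fun j' _ hj' => hother j' (hn.injective.ne hj')) (by simp)
    · rw [Function.extend_apply' _ _ _ hN, Nat.sub_eq_zero_of_le (hB.apply_le N m)]
      exact Finset.sum_eq_zero fun j _ => hother j fun hj => hN ⟨j, hj⟩
  refine ⟨Function.extend n i fun _ => k, ?_, ⟨n j₀, by rw [hn.injective.extend_apply, hj₀]⟩,
    hval, fun m hm => ?_⟩
  · refine (Set.finite_range n).subset fun N hN => ?_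
    by_contra hc
    rw [Set.mem_ofPred_eq, Function.extend_apply' _ _ _ hc] at hN
    exact hN.false
  · obtain ⟨j, -, hj⟩ := Finset.exists_ne_zero_of_sum_ne_zero hm
    exact ⟨n j, by omega⟩

namespace IsExpansion

variable {e : ℕ → ℕ}

lemma inSpan (hB : IsBlockSeq k B) (h : IsExpansion k B e p) : InSpan k B p := by
  obtain ⟨n₀, hn₀⟩ := h.exists_eq_zero
  -- For `k = 0` no coefficient is below `k`, so `n₀` has to be added by hand.
  let s := insert n₀ h.finite.toFinset
  have hs : ∀ n, e n < k → n ∈ s := fun n hn => by simp [s, hn]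
  have hek : ∀ n ∈ s, e n ≤ k := by
    simp only [s, Finset.forall_mem_insert, Set.Finite.mem_toFinset, Set.mem_ofPred_eq]
    exact ⟨by omega, fun n hn => hn.le⟩
  convert inSpan_sum (B := B) s hek ⟨n₀, by simp [s], hn₀⟩ using 1
  funext m
  by_cases hm : ∃ n, B n m ≠ 0
  · obtain ⟨n, hn⟩ := hm
    rw [h.eq_sub n m hn]
    symm
    refine Finset.sum_eq_single n (fun n' _ hn' => ?_) fun hns => ?_
    · have : B n' m = 0 := by_contra fun hc => hn' (hB.index_unique hc hn)
      omega
    · have := hB.apply_le n m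
      have : ¬ e n < k := fun hc => hns (hs n hc)
      omega
  · have hp : p m = 0 := by_contra fun hc => hm (h.exists_ne_zero m hc)
    push Not at hm
    simp [hp, hm]

lemma exists_lt (hB : IsBlockSeq k B) (h : IsExpansion k B e p) {m : ℕ} (hm : p m ≠ 0) :
    ∃ n, e n < k ∧ B n m ≠ 0 := by
  obtain ⟨n, hn⟩ := h.exists_ne_zero m hm
  have h₁ := h.eq_sub n m hn
  have h₂ := hB.apply_le n m
  exact ⟨n, by omega, hn⟩

lemma ne_zero_of_eq (h : IsExpansion k B e p) {n m : ℕ} (hn : e n < k) (hm : B n m = k) :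
    p m ≠ 0 := by
  have := h.eq_sub n m (by omega)
  omega

lemma isFINk (hB : IsBlockSeq k B) (h : IsExpansion k B e p) : IsFINk k p := by
  have hle : ∀ m, p m ≤ k := fun m => by
    by_cases hm : p m = 0
    · omega
    · obtain ⟨n, -, hn⟩ := h.exists_lt hB hm
      have h₁ := h.eq_sub n m hn
      have h₂ := hB.apply_le n m
      omega
  refine ⟨hle, ?_, ?_⟩
  · refine (h.finite.biUnion fun n _ => (hB.1 n).2.1).subset fun m hm => ?_
    obtain ⟨n, hn, hnm⟩ := h.exists_lt hB hm
    exact Set.mem_biUnion (show n ∈ {n | e n < k} from hn) hnm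
  · obtain ⟨n, hn⟩ := h.exists_eq_zero
    obtain ⟨z, hz⟩ := (hB.1 n).2.2
    have h₁ := h.eq_sub n z
    have h₂ := hle z
    exact ⟨z, by omega⟩

lemma index_unique (hA : IsBlockSeq k A) (hB : IsBlockSeq k B) {c c' : ℕ → ℕ} {n n' l : ℕ}
    (h : IsExpansion k B c (A n)) (h' : IsExpansion k B c' (A n')) (hl : c l < k)
    (hl' : c' l < k) : n = n' := by
  obtain ⟨z, hz⟩ := (hB.1 l).2.2
  exact hA.index_unique (h.ne_zero_of_eq hl hz) (h'.ne_zero_of_eq hl' hz)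

open Classical in
lemma inSpan_of_forall (hA : IsBlockSeq k A) (hB : IsBlockSeq k B) (h : IsExpansion k A e p)
    (hAB : ∀ n, e n < k → InSpan k B (A n)) : InSpan k B p := by
  choose! c hc using fun n hn => (hAB n hn).exists_isExpansion hB
  -- The coefficient of `B l` in `p`: at most one `A n` occurring in `p` involves `B l`.
  let w l := if hl : ∃ n, e n < k ∧ c n l < k then c hl.choose l + e hl.choose else k
  have hw : ∀ l n, e n < k → c n l < k → w l = c n l + e n := by
    intro l n hn hl
    have hex : ∃ n, e n < k ∧ c n l < k := ⟨n, hn, hl⟩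
    have : hex.choose = n := index_unique hA hB (hc _ hex.choose_spec.1) (hc n hn)
      hex.choose_spec.2 hl
    simp only [w, dif_pos hex, this]
  have hw' : ∀ l, (¬ ∃ n, e n < k ∧ c n l < k) → w l = k := fun l hl => dif_neg hl
  refine IsExpansion.inSpan hB (e := w) ⟨?_, ?_, fun l m hlm => ?_, fun m hm => ?_⟩
  · refine (h.finite.biUnion fun n hn => (hc n hn).finite).subset fun l hl => ?_
    by_contra hl'
    simp only [Set.mem_iUnion, Set.mem_ofPred_eq, exists_prop] at hl hl'
    exact hl.ne (hw' l hl')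
  · obtain ⟨n, hn⟩ := h.exists_eq_zero
    rcases k.eq_zero_or_pos with rfl | hk
    · exact ⟨n, hw' n (by simp)⟩
    · obtain ⟨l, hl⟩ := (hc n (by omega)).exists_eq_zero
      exact ⟨l, by rw [hw l n (by omega) (by omega)]; omega⟩
  · have hlk := hB.apply_le l m
    by_cases hpm : p m = 0
    · by_cases hl : ∃ n, e n < k ∧ c n l < k
      · obtain ⟨n, hn, hnl⟩ := hl
        have h₁ := hw l n hn hnl
        have h₂ := (hc n hn).eq_sub l m hlm
        have h₃ := h.eq_sub n m
        omega
      · have := hw' l hl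
        omega
    · obtain ⟨n, hn, hnm⟩ := h.exists_lt hA hpm
      have h₁ := (hc n hn).eq_sub l m hlm
      have h₂ := hw l n hn (by omega)
      have h₃ := h.eq_sub n m hnm
      omega
  · obtain ⟨n, hn, hnm⟩ := h.exists_lt hA hm
    exact (hc n hn).exists_ne_zero m hnm

end IsExpansion

lemma InSpan.trans (hA : IsBlockSeq k A) (hB : IsBlockSeq k B) (hp : InSpan k A p)
    (hAB : Cond k A B) : InSpan k B p := by
  obtain ⟨e, he⟩ := hp.exists_isExpansion hA
  exact he.inSpan_of_forall hA hB fun n _ => hAB n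

lemma InSpan.isFINk (hB : IsBlockSeq k B) (hp : InSpan k B p) : IsFINk k p := by
  obtain ⟨e, he⟩ := hp.exists_isExpansion hB
  exact he.isFINk hB

lemma InSpan.exists_ne_zero (hB : IsBlockSeq k B) (hp : InSpan k B p) {m : ℕ} (hm : p m ≠ 0) :
    ∃ n, B n m ≠ 0 := by
  obtain ⟨e, he⟩ := hp.exists_isExpansion hB
  exact he.exists_ne_zero m hm

/-! ### Condensation and almost condensation -/

lemma Cond.refl (k : ℕ) (A : ℕ → ℕ → ℕ) : Cond k A A := inSpan_self k A

lemma Cond.trans (hB : IsBlockSeq k B) (hC : IsBlockSeq k C) (hAB : Cond k A B)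
    (hBC : Cond k B C) : Cond k A C :=
  fun n => (hAB n).trans hB hC hBC

lemma cond_shift (k : ℕ) (A : ℕ → ℕ → ℕ) (N : ℕ) : Cond k (fun n => A (n + N)) A :=
  fun n => inSpan_self k A (n + N)

lemma Cond.isSparse {f : ℕ → ℕ} (hA : IsBlockSeq k A) (hB : IsBlockSeq k B) (hAB : Cond k A B)
    (hf : IsSparse f B) : IsSparse f A := by
  intro i j hij x y hx hy
  obtain ⟨c, hc⟩ := (hAB i).exists_isExpansion hB
  obtain ⟨d, hd⟩ := (hAB j).exists_isExpansion hB
  obtain ⟨m, hm, hmx⟩ := hc.exists_lt hB hx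
  obtain ⟨n, hn, hny⟩ := hd.exists_lt hB hy
  obtain ⟨z, hz⟩ := (hB.1 m).2.2
  obtain ⟨z', hz'⟩ := (hB.1 n).2.2
  have hzz' : z < z' :=
    hA.lt_of_ne_zero hij (hc.ne_zero_of_eq hm hz) (hd.ne_zero_of_eq hn hz')
  have hmn : m < n := by
    by_contra! hnm
    rcases hnm.eq_or_lt with rfl | hnm
    · exact (hA.lt_of_ne_zero hij (hc.ne_zero_of_eq hm hz') (hd.ne_zero_of_eq hn hz')).false
    · exact hzz'.asymm (hB.lt_of_ne_zero hnm (by omega) (by omega))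
  exact hf m n hmn x y hmx hny

lemma Cond.almostCond (h : Cond k A B) : AlmostCond k A B := ⟨0, fun n _ => h n⟩

lemma AlmostCond.exists_forall_inSpan (hA : IsBlockSeq k A) (hB : IsBlockSeq k B)
    (h : AlmostCond k A B) :
    ∃ M, ∀ q, InSpan k A q → (∀ x, q x ≠ 0 → M < x) → InSpan k B q := by
  obtain ⟨N, hN⟩ := h
  obtain ⟨M, hM⟩ := (hA.1 N).2.2
  refine ⟨M, fun q hq hqM => ?_⟩
  obtain ⟨e, he⟩ := hq.exists_isExpansion hA
  refine he.inSpan_of_forall hA hB fun n hn => hN n ?_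
  by_contra! hnN
  obtain ⟨z, hz⟩ := (hA.1 n).2.2
  exact (hqM z (he.ne_zero_of_eq hn hz)).asymm
    (hA.lt_of_ne_zero hnN (by omega) (by omega))

lemma AlmostCond.trans (hA : IsBlockSeq k A) (hB : IsBlockSeq k B) (hC : IsBlockSeq k C)
    (hAB : AlmostCond k A B) (hBC : AlmostCond k B C) : AlmostCond k A C := by
  obtain ⟨M, hM⟩ := hBC.exists_forall_inSpan hB hC
  obtain ⟨N, hN⟩ := hAB
  refine ⟨max N (M + 1), fun n hn => hM _ (hN n (le_of_max_le_left hn)) fun x hx => ?_⟩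
  exact (le_of_max_le_right hn).trans (hA.le_of_ne_zero hx)

/-! ### Grafting finite block sequences -/

lemma mem_rList {d : ℕ} : p ∈ rList d A ↔ ∃ n < d, A n = p := by simp [rList]

lemma length_rList (d : ℕ) (A : ℕ → ℕ → ℕ) : (rList d A).length = d := by simp [rList]

lemma getD_rList {d n : ℕ} (h : n < d) (A : ℕ → ℕ → ℕ) (q : ℕ → ℕ) :
    (rList d A).getD n q = A n := by
  simp [rList, List.getD, h]

lemma mem_basic_rList (hA : IsBlockSeq k A) (d : ℕ) : A ∈ Basic k (rList d A) A :=
  ⟨hA, by rw [length_rList], Cond.refl k A⟩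

lemma finCond_nil (k : ℕ) (A : ℕ → ℕ → ℕ) : FinCond k [] A := by
  simp [FinCond, IsFinBlockSeq]

lemma finCond_singleton (hp : IsFINk k p) (hpA : InSpan k A p) : FinCond k [p] A := by
  simp [FinCond, IsFinBlockSeq, hp, hpA]

lemma finCond_rList (hA : IsBlockSeq k A) (hAB : Cond k A B) (d : ℕ) :
    FinCond k (rList d A) B := by
  refine ⟨⟨fun p hp => ?_, fun m hm i j hi hj => ?_⟩, fun p hp => ?_⟩
  · obtain ⟨n, -, rfl⟩ := mem_rList.1 hp
    exact hA.1 n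
  · rw [length_rList] at hm
    rw [getD_rList (by omega)] at hi
    rw [getD_rList hm] at hj
    exact hA.2 m i j hi hj
  · obtain ⟨n, -, rfl⟩ := mem_rList.1 hp
    exact hAB n

lemma finCond_of_mem_basic {a : List (ℕ → ℕ)} {X : ℕ → ℕ → ℕ} (hX : X ∈ Basic k a B) :
    FinCond k a B := by
  have := finCond_rList hX.1 hX.2.2 a.length
  rwa [hX.2.1] at this

lemma FinCond.trans {a : List (ℕ → ℕ)} (hA : IsBlockSeq k A) (hB : IsBlockSeq k B)
    (ha : FinCond k a A) (hAB : Cond k A B) : FinCond k a B :=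
  ⟨ha.1, fun p hp => (ha.2 p hp).trans hA hB hAB⟩

/-- The finite sequence `a` followed by all terms of the sequence `Y`. -/
def graft (a : List (ℕ → ℕ)) (Y : ℕ → ℕ → ℕ) (n : ℕ) : ℕ → ℕ :=
  if n < a.length then a.getD n fun _ => 0 else Y (n - a.length)

lemma graft_of_lt {a : List (ℕ → ℕ)} {n : ℕ} (hn : n < a.length) (Y : ℕ → ℕ → ℕ) :
    graft a Y n = a.getD n fun _ => 0 := if_pos hn

lemma graft_add_length (a : List (ℕ → ℕ)) (Y : ℕ → ℕ → ℕ) (n : ℕ) :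
    graft a Y (n + a.length) = Y n := by
  simp [graft]

lemma rList_length_graft (a : List (ℕ → ℕ)) (Y : ℕ → ℕ → ℕ) :
    rList a.length (graft a Y) = a := by
  refine List.ext_getElem (length_rList _ _) fun n _ hn => ?_
  simp [rList, graft, hn]

lemma forall_graft {P : (ℕ → ℕ) → Prop} {a : List (ℕ → ℕ)} {Y : ℕ → ℕ → ℕ}
    (ha : ∀ p ∈ a, P p) (hY : ∀ n, P (Y n)) (n : ℕ) : P (graft a Y n) := by
  by_cases hn : n < a.length
  · rw [graft_of_lt hn, List.getD_eq_getElem _ _ hn]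
    exact ha _ (List.getElem_mem hn)
  · rw [graft, if_neg hn]
    exact hY _

lemma IsBlockSeq.graft {a : List (ℕ → ℕ)} {Y : ℕ → ℕ → ℕ} (ha : IsFinBlockSeq k a)
    (hY : IsBlockSeq k Y) (haY : ∀ p ∈ a, ∀ i j, p i ≠ 0 → Y 0 j ≠ 0 → i < j) :
    IsBlockSeq k (graft a Y) := by
  refine ⟨forall_graft ha.1 hY.1, fun n i j hi hj => ?_⟩
  rcases lt_trichotomy (n + 1) a.length with hn | hn | hn
  · rw [graft_of_lt (by omega)] at hi
    rw [graft_of_lt hn] at hj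
    exact ha.2 n hn i j hi hj
  · have hlt : n < a.length := by omega
    rw [graft_of_lt hlt, List.getD_eq_getElem _ _ hlt] at hi
    rw [FINkSpace.graft, if_neg (by omega), hn, Nat.sub_self] at hj
    exact haY _ (List.getElem_mem hlt) i j hi hj
  · obtain ⟨m, rfl⟩ := Nat.exists_eq_add_of_le' (Nat.le_of_lt_succ hn)
    rw [graft_add_length] at hi
    rw [Nat.add_right_comm, graft_add_length] at hj
    exact hY.2 m i j hi hj

lemma exists_forall_supp_le {a : List (ℕ → ℕ)} (ha : ∀ p ∈ a, (supp p).Finite) :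
    ∃ M, ∀ p ∈ a, ∀ x, p x ≠ 0 → x ≤ M := by
  obtain ⟨M, hM⟩ := ((List.finite_toSet a).biUnion ha).bddAbove
  exact ⟨M, fun p hp x hx => hM (Set.mem_biUnion (show p ∈ {p | p ∈ a} from hp) hx)⟩

lemma exists_graft_mem_basic {a : List (ℕ → ℕ)} {Y : ℕ → ℕ → ℕ} (ha : FinCond k a B)
    (hY : IsBlockSeq k Y) (hYB : AlmostCond k Y B) :
    ∃ N, graft a (fun n => Y (n + N)) ∈ Basic k a B := by
  obtain ⟨M, hM⟩ := exists_forall_supp_le fun p hp => (ha.1.1 p hp).2.1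
  obtain ⟨N, hN⟩ := hYB
  refine ⟨max N (M + 1), IsBlockSeq.graft ha.1 (hY.shift _) fun p hp i j hi hj => ?_,
    rList_length_graft a _, forall_graft ha.2 fun n => hN _ (by omega)⟩
  have h₁ := hM p hp i hi
  have h₂ := hY.le_of_ne_zero hj
  omega

namespace Coideal

variable {H : Coideal k}

lemma mem_of_shift_eq {Y Y' : ℕ → ℕ → ℕ} {d N : ℕ} (hY : H.mem Y) (hY' : IsBlockSeq k Y')
    (h : ∀ n, Y' (n + d) = Y (n + N)) : H.mem Y' := by
  refine H.finiteChanges Y Y' hY hY' ?_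
  refine (((Set.finite_lt_nat N).image Y).union ((Set.finite_lt_nat d).image Y')).subset ?_
  rintro p (⟨⟨n, rfl⟩, hn⟩ | ⟨⟨n, rfl⟩, hn⟩)
  · refine .inl ⟨n, ?_, rfl⟩
    by_contra hnN
    exact hn ⟨n - N + d, by rw [h, Nat.sub_add_cancel (not_lt.1 hnN)]⟩
  · refine .inr ⟨n, ?_, rfl⟩
    by_contra hnd
    exact hn ⟨n - d + N, by rw [← h, Nat.sub_add_cancel (not_lt.1 hnd)]⟩

lemma mem_shift (hA : H.mem A) (N : ℕ) : H.mem fun n => A (n + N) :=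
  mem_of_shift_eq (d := 0) hA ((H.blockseq A hA).shift N) fun _ => rfl

lemma exists_mem_basic {a : List (ℕ → ℕ)} {Y : ℕ → ℕ → ℕ} (ha : FinCond k a B) (hY : H.mem Y)
    (hYB : AlmostCond k Y B) : ∃ Y', H.mem Y' ∧ Y' ∈ Basic k a B ∧ AlmostCond k Y' Y := by
  obtain ⟨N, hN⟩ := exists_graft_mem_basic ha (H.blockseq Y hY) hYB
  refine ⟨_, mem_of_shift_eq hY hN.1 (graft_add_length a _), hN, a.length, fun n hn => ?_⟩
  rw [graft, if_neg (not_lt.2 hn)]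
  exact inSpan_self k Y _

end Coideal

/-! ### Depth -/

lemma InSpan.eventually_inSpanList (hp : InSpan k A p) :
    ∀ᶠ d in Filter.atTop, InSpanList k (rList d A) p := by
  obtain ⟨l, n, i, hn, hi, h0, rfl⟩ := hp
  filter_upwards [Filter.eventually_gt_atTop (n (Fin.last l))] with d hd
  have hlt : ∀ j, n j < d := fun j => (hn.monotone (Fin.le_last j)).trans_lt hd
  refine ⟨l, n, i, hn, fun j => by rw [length_rList]; exact hlt j, hi, h0, ?_⟩
  simp only [getD_rList (hlt _)]

lemma InSpanList.inSpan {d : ℕ} (hp : InSpanList k (rList d A) p) : InSpan k A p := by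
  obtain ⟨l, n, i, hn, hlt, hi, h0, rfl⟩ := hp
  simp only [length_rList] at hlt
  exact ⟨l, n, i, hn, hi, h0, by simp only [getD_rList (hlt _)]⟩

lemma FinCond.inSpanList_depth {a : List (ℕ → ℕ)} (ha : FinCond k a A) :
    ∀ p ∈ a, InSpanList k (rList (depth k A a) A) p :=
  Nat.sInf_mem ((Filter.eventually_all_finite (List.finite_toSet a)).2
    fun p hp => (ha.2 p hp).eventually_inSpanList).exists

lemma FinCond.inSpan_of_mem_basic_depth {a : List (ℕ → ℕ)} (ha : FinCond k a A)
    (hB : B ∈ Basic k (rList (depth k A a) A) A) (hp : p ∈ a) : InSpan k B p := by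
  have hp' := ha.inSpanList_depth p hp
  rw [← hB.2.1, length_rList] at hp'
  exact hp'.inSpan

/-! ### Thresholds indexed by finite sequences -/

/-- The lists of at most `x + 1` vectors bounded by `k` and supported in `{0, …, x}`; they include
all finite block sequences in `FIN_k` with supports in `{0, …, x}` if `k ≠ 0`. -/
def boundedLists (k x : ℕ) : Set (List (ℕ → ℕ)) :=
  {a | a.length ≤ x + 1 ∧ ∀ p ∈ a, (∀ n, p n ≤ k) ∧ ∀ n, p n ≠ 0 → n ≤ x}

lemma finite_setOf_le_of_supp_le (k x : ℕ) :
    {p : ℕ → ℕ | (∀ n, p n ≤ k) ∧ ∀ n, p n ≠ 0 → n ≤ x}.Finite := by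
  let b : ℕ →₀ ℕ := Finsupp.indicator (Finset.range (x + 1)) fun _ _ => k
  refine ((Set.finite_Iic b).image (⇑)).subset fun p hp => ?_
  have hfin : p.support.Finite := (Set.finite_Iic x).subset hp.2
  refine ⟨Finsupp.ofSupportFinite p hfin, fun n => ?_, Finsupp.ofSupportFinite_coe⟩
  have h₁ := hp.1 n
  have h₂ := hp.2 n
  simp only [Finsupp.ofSupportFinite_coe, b, Finsupp.indicator_apply, Finset.mem_range]
  split_ifs <;> omega

lemma finite_boundedLists (k x : ℕ) : (boundedLists k x).Finite := by
  let P := {p : ℕ → ℕ | (∀ n, p n ≤ k) ∧ ∀ n, p n ≠ 0 → n ≤ x}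
  have : Finite P := finite_setOf_le_of_supp_le k x
  refine ((List.finite_length_le P (x + 1)).image (List.map (↑))).subset fun a ha => ?_
  obtain ⟨l, rfl⟩ : a ∈ Set.range (List.map ((↑) : P → ℕ → ℕ)) := by
    rw [Set.range_list_map_coe]
    exact ha.2
  exact ⟨l, by simpa using ha.1, rfl⟩

lemma boundedLists_mono (k : ℕ) : Monotone (boundedLists k) := fun _ _ hxy _ ha =>
  ⟨ha.1.trans (by omega), fun p hp => ⟨(ha.2 p hp).1, fun n hn => ((ha.2 p hp).2 n hn).trans hxy⟩⟩

lemma exists_monotone_forall_boundedLists_le (k : ℕ) (M : List (ℕ → ℕ) → ℕ) :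
    ∃ f : ℕ → ℕ, Monotone f ∧ ∀ x, ∀ a ∈ boundedLists k x, M a ≤ f x := by
  refine ⟨fun x => (finite_boundedLists k x).toFinset.sup M, fun x y hxy => ?_, fun x a ha => ?_⟩
  · exact Finset.sup_mono (Set.Finite.toFinset_mono (boundedLists_mono k hxy))
  · exact Finset.le_sup (f := M) ((Set.Finite.mem_toFinset _).2 ha)

lemma IsBlockSeq.rList_mem_boundedLists (hA : IsBlockSeq k A) {n x : ℕ}
    (hx : IsGreatest (supp (A n)) x) : rList (n + 1) A ∈ boundedLists k x := by
  refine ⟨?_, fun p hp => ?_⟩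
  · rw [length_rList]
    exact Nat.succ_le_succ (hA.le_of_ne_zero hx.1)
  · obtain ⟨m, hm, rfl⟩ := mem_rList.1 hp
    refine ⟨hA.apply_le m, fun y hy => ?_⟩
    rcases (Nat.le_of_lt_succ hm).eq_or_lt with rfl | hmn
    · exact hx.2 hy
    · exact (hA.lt_of_ne_zero hmn hy hx.1).le

lemma countable_setOf_finCond (k : ℕ) (A : ℕ → ℕ → ℕ) : {a | FinCond k a A}.Countable := by
  refine (Set.countable_range (List.map ((⇑) : (ℕ →₀ ℕ) → ℕ → ℕ))).mono fun a ha => ?_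
  rw [Set.range_list_map]
  exact fun p hp => ⟨Finsupp.ofSupportFinite p (ha.1.1 p hp).2.1, Finsupp.ofSupportFinite_coe⟩

/-! ### Sparse condensations -/

section ShortGaps

variable {α : Type*} [LinearOrder α] {f : α → α} {s t : Set α}

/-- The left ends of the short gaps of `s`: points `x ∈ s` whose distance to some larger point of
`s` is not large on the scale given by `f`. -/
def shortGaps (f : α → α) (s : Set α) : Set α := {x ∈ s | ∃ y ∈ s, x < y ∧ y ≤ f x}

lemma shortGaps_subset (f : α → α) (s : Set α) : shortGaps f s ⊆ s := fun _ hx => hx.1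

lemma shortGaps_mono (f : α → α) (hst : s ⊆ t) : shortGaps f s ⊆ shortGaps f t :=
  fun _ ⟨hx, y, hy, h⟩ => ⟨hst hx, y, hst hy, h⟩

lemma shortGaps_union_of_far (hst : ∀ x ∈ s, ∀ y ∈ t, x < y) (hfar : ∀ x ∈ s, ∀ y ∈ t, f x < y) :
    shortGaps f (s ∪ t) = shortGaps f s ∪ shortGaps f t := by
  refine subset_antisymm ?_ (Set.union_subset (shortGaps_mono f Set.subset_union_left)
    (shortGaps_mono f Set.subset_union_right))
  rintro x ⟨hx | hx, y, hy | hy, hxy, hyf⟩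
  · exact .inl ⟨hx, y, hy, hxy, hyf⟩
  · exact absurd hyf (hfar x hx y hy).not_ge
  · exact absurd hxy (hst y hy x hx).asymm
  · exact .inr ⟨hx, y, hy, hxy, hyf⟩

lemma shortGaps_union_of_near {x w : α} (hst : ∀ x ∈ s, ∀ y ∈ t, x < y) (hx : IsGreatest s x)
    (hw : w ∈ t) (hwx : w ≤ f x) :
    shortGaps f (s ∪ t) = insert x (shortGaps f s ∪ shortGaps f t) := by
  refine subset_antisymm ?_ (Set.insert_subset ⟨.inl hx.1, w, .inr hw, hst x hx.1 w hw, hwx⟩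
    (Set.union_subset (shortGaps_mono f Set.subset_union_left)
      (shortGaps_mono f Set.subset_union_right)))
  rintro z ⟨hz | hz, y, hy | hy, hzy, hyf⟩
  · exact .inr (.inl ⟨hz, y, hy, hzy, hyf⟩)
  · rcases (hx.2 hz).eq_or_lt with rfl | hzx
    · exact .inl rfl
    · exact .inr (.inl ⟨hz, x, hx.1, hzx, (hst x hx.1 y hy).le.trans hyf⟩)
  · exact absurd hzy (hst y hy z hz).asymm
  · exact .inr (.inr ⟨hz, y, hy, hzy, hyf⟩)

lemma disjoint_shortGaps (f : α → α) (hst : ∀ x ∈ s, ∀ y ∈ t, x < y) :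
    Disjoint (shortGaps f s) (shortGaps f t) :=
  Set.disjoint_left.2 fun x hs ht => (hst x hs.1 x ht.1).false

lemma ncard_shortGaps_union_of_far (hs : s.Finite) (ht : t.Finite)
    (hst : ∀ x ∈ s, ∀ y ∈ t, x < y) (hfar : ∀ x ∈ s, ∀ y ∈ t, f x < y) :
    (shortGaps f (s ∪ t)).ncard = (shortGaps f s).ncard + (shortGaps f t).ncard := by
  rw [shortGaps_union_of_far hst hfar, Set.ncard_union_eq (disjoint_shortGaps f hst)
    (hs.subset (shortGaps_subset f s)) (ht.subset (shortGaps_subset f t))]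

lemma ncard_shortGaps_union_of_near {x w : α} (hs : s.Finite) (ht : t.Finite)
    (hst : ∀ x ∈ s, ∀ y ∈ t, x < y) (hx : IsGreatest s x) (hw : w ∈ t) (hwx : w ≤ f x) :
    (shortGaps f (s ∪ t)).ncard = (shortGaps f s).ncard + (shortGaps f t).ncard + 1 := by
  have hs' := hs.subset (shortGaps_subset f s)
  have ht' := ht.subset (shortGaps_subset f t)
  have hnotMem : x ∉ shortGaps f s ∪ shortGaps f t := by
    rintro (⟨-, y, hy, hxy, -⟩ | ⟨hxt, -⟩)
    · exact (hx.2 hy).not_gt hxy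
    · exact (hst x hx.1 x hxt).false
  rw [shortGaps_union_of_near hst hx hw hwx, Set.ncard_insert_of_notMem hnotMem (hs'.union ht'),
    Set.ncard_union_eq (disjoint_shortGaps f hst) hs' ht']

end ShortGaps

/-- The number of short gaps in the support of `p`. -/
noncomputable def gapCount (f p : ℕ → ℕ) : ℕ := (shortGaps f (supp p)).ncard

lemma IsBlockSeq.gapCount_add_of_far (hA : IsBlockSeq k A) {f : ℕ → ℕ} {m n : ℕ} (hmn : m < n)
    (hfar : ∀ x y, A m x ≠ 0 → A n y ≠ 0 → f x < y) :
    gapCount f (A m + A n) = gapCount f (A m) + gapCount f (A n) := by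
  rw [gapCount, supp_add]
  exact ncard_shortGaps_union_of_far (hA.1 m).2.1 (hA.1 n).2.1
    (fun _ hx _ hy => hA.lt_of_ne_zero hmn hx hy) fun x hx y hy => hfar x y hx hy

lemma IsBlockSeq.gapCount_add_of_near (hA : IsBlockSeq k A) {f : ℕ → ℕ} {m n x y : ℕ}
    (hmn : m < n) (hx : IsGreatest (supp (A m)) x) (hy : A n y ≠ 0) (hyx : y ≤ f x) :
    gapCount f (A m + A n) = gapCount f (A m) + gapCount f (A n) + 1 := by
  rw [gapCount, supp_add]
  exact ncard_shortGaps_union_of_near (hA.1 m).2.1 (hA.1 n).2.1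
    (fun _ hx _ hy => hA.lt_of_ne_zero hmn hx hy) hx hy hyx

lemma IsBlockSeq.exists_gapCount_add (hA : IsBlockSeq k A) (f : ℕ → ℕ) :
    ∃ n, 0 < n ∧ gapCount f (A 0 + A n) = gapCount f (A 0) + gapCount f (A n) := by
  obtain ⟨M, hM⟩ := ((hA.1 0).2.1.image f).bddAbove
  refine ⟨M + 1, M.succ_pos, hA.gapCount_add_of_far M.succ_pos fun x y hx hy => ?_⟩
  exact (hM (Set.mem_image_of_mem f hx)).trans_lt (hA.le_of_ne_zero hy)

lemma IsBlockSeq.isSparse_of_even_gapCount (hA : IsBlockSeq k A) {f : ℕ → ℕ} (hf : Monotone f)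
    (heven : ∀ p, InSpan k A p → Even (gapCount f p)) : IsSparse f A := by
  refine hA.isSparse_of_succ fun n x y hx hy => ?_
  by_contra! hyx
  obtain ⟨z, hz⟩ := (hA.1 n).exists_isGreatest hx
  have hcount := hA.gapCount_add_of_near n.lt_succ_self hz hy (hyx.trans (hf (hz.2 hx)))
  have hsum := heven _ (inSpan_add k A n.lt_succ_self.ne)
  rw [hcount, Nat.even_add_one] at hsum
  exact hsum ((heven _ (inSpan_self k A n)).add (heven _ (inSpan_self k A (n + 1))))

namespace Coideal

variable {H : Coideal k}

lemma exists_homogeneous (hA : H.mem A) (P : (ℕ → ℕ) → Prop) :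
    ∃ B, H.mem B ∧ Cond k B A ∧
      ((∀ p, InSpan k B p → P p) ∨ ∀ p, InSpan k B p → ¬ P p) := by
  obtain ⟨B, hB, hBA, hO⟩ := H.a4 A hA [] (finCond_nil k A) {b | ∃ p, b = [p] ∧ P p}
  have hBb := H.blockseq B hB
  have hfirst : ∀ p, InSpan k B p → ∃ X ∈ Basic k [] B, [p] = rList 1 X := fun p hp => by
    obtain ⟨N, hN⟩ := exists_graft_mem_basic (finCond_singleton (hp.isFINk hBb) hp) hBb
      (Cond.refl k B).almostCond
    exact ⟨_, ⟨hN.1, rfl, hN.2.2⟩, hN.2.1.symm⟩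
  refine ⟨B, hB, hBA.2.2, hO.imp (fun h p hp => ?_) fun h p hp hPp => ?_⟩
  · obtain ⟨q, hq, hPq⟩ := h (hfirst p hp)
    rwa [List.singleton_injective hq]
  · exact Set.eq_empty_iff_forall_notMem.1 h [p] ⟨hfirst p hp, p, rfl, hPp⟩

lemma exists_isSparse (hA : H.mem A) {f : ℕ → ℕ} (hf : Monotone f) :
    ∃ B, H.mem B ∧ Cond k B A ∧ IsSparse f B := by
  obtain ⟨B, hB, hBA, heven | hodd⟩ := exists_homogeneous hA fun p => Even (gapCount f p)
  · exact ⟨B, hB, hBA, (H.blockseq B hB).isSparse_of_even_gapCount hf heven⟩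
  · obtain ⟨n, hn, hcount⟩ := (H.blockseq B hB).exists_gapCount_add f
    have hsum := hodd _ (inSpan_add k B hn.ne)
    rw [hcount, Nat.even_add] at hsum
    exact absurd (iff_of_false (hodd _ (inSpan_self k B 0)) (hodd _ (inSpan_self k B n))) hsum

end Coideal

/-! ### Diagonalization -/

lemma IsSparse.threshold_lt {X : ℕ → ℕ → ℕ} {f : ℕ → ℕ} {M : List (ℕ → ℕ) → ℕ}
    (hX : IsBlockSeq k X) (hsparse : IsSparse f X) (hM : ∀ x, ∀ a ∈ boundedLists k x, M a ≤ f x)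
    {m n y : ℕ} (hmn : m < n) (hy : X n y ≠ 0) : M (rList (m + 1) X) < y := by
  obtain ⟨z, hz⟩ := (hX.1 m).2.2
  have hz0 : X m z ≠ 0 := by have := hX.apply_le n y; omega
  obtain ⟨x, hx⟩ := (hX.1 m).exists_isGreatest hz0
  exact (hM x _ (hX.rList_mem_boundedLists hx)).trans_lt (hsparse m n hmn x y hx.1 hy)

namespace Coideal

variable {H : Coideal k}

lemma exists_forall_threshold_lt (hA : H.mem A) (M : List (ℕ → ℕ) → ℕ) :
    ∃ B, H.mem B ∧ Cond k B A ∧ ∀ X, IsBlockSeq k X → Cond k X B →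
      ∀ m n y, m ≤ n → X n y ≠ 0 → M (rList m X) < y := by
  obtain ⟨f, hf, hMf⟩ := exists_monotone_forall_boundedLists_le k M
  have hA' := mem_shift hA (M [] + 1)
  obtain ⟨B, hB, hBA', hsparse⟩ := exists_isSparse hA' hf
  have hAb := H.blockseq A hA
  have hAb' := H.blockseq _ hA'
  have hBb := H.blockseq B hB
  refine ⟨B, hB, hBA'.trans hAb' hAb (cond_shift k A _), fun X hX hXB m n y hmn hy => ?_⟩
  obtain _ | m := m
  · obtain ⟨i, hi⟩ := ((hXB n).trans hBb hAb' hBA').exists_ne_zero hAb' hy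
    have hle := hAb.le_of_ne_zero hi
    simp only [rList, List.range_zero, List.map_nil]
    omega
  · exact (hXB.isSparse hX hBb hsparse).threshold_lt hX hMf hmn hy

lemma exists_diagonal {As : List (ℕ → ℕ) → ℕ → ℕ → ℕ} (hA : H.mem A)
    (hAs : ∀ a, FinCond k a A → IsBlockSeq k (As a) ∧ AlmostCond k A (As a)) :
    ∃ B, H.mem B ∧ Cond k B A ∧
      ∀ a, ∀ X ∈ Basic k a B, ∀ n, a.length ≤ n → InSpan k (As a) (X n) := by
  have hAb := H.blockseq A hA
  choose! M hM using fun a ha => (hAs a ha).2.exists_forall_inSpan hAb (hAs a ha).1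
  obtain ⟨B, hB, hBA, hlt⟩ := exists_forall_threshold_lt hA M
  have hBb := H.blockseq B hB
  refine ⟨B, hB, hBA, fun a X hX n hn => ?_⟩
  refine hM a ((finCond_of_mem_basic hX).trans hBb hAb hBA) _
    ((hX.2.2 n).trans hBb hAb hBA) fun y hy => ?_
  have := hlt X hX.1 hX.2.2 a.length n y hn hy
  rwa [hX.2.1] at this

end Coideal

/-! ### Semiselectivity and σ-distributivity -/

variable {H : Coideal k}

/-- The partial order `(H, ≤*)` is σ-distributive: countably many `≤*`-dense open sets have a
`≤*`-dense intersection. -/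
def SigmaDistributive (k : ℕ) (H : Coideal k) : Prop :=
  ∀ D : ℕ → Set (ℕ → ℕ → ℕ), (∀ n, StarDenseOpen k H (D n)) →
    ∀ A, H.mem A → ∃ B, H.mem B ∧ (∀ n, B ∈ D n) ∧ AlmostCond k B A

lemma StarDenseOpen.denseOpenIn_inter {D : Set (ℕ → ℕ → ℕ)} (hD : StarDenseOpen k H D)
    (hA : IsBlockSeq k A) (d : ℕ) :
    DenseOpenIn k ({B | H.mem B} ∩ Basic k (rList d A) A ∩ D)
      ({B | H.mem B} ∩ Basic k (rList d A) A) := by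
  refine ⟨Set.inter_subset_left, fun B ⟨hB, hBA⟩ => ?_,
    fun X Y hX hY hXY => ⟨hX, hD.2.2 X Y hX.1 hY.2 hXY.almostCond⟩⟩
  have hBb := H.blockseq B hB
  obtain ⟨Y, hY, hYB⟩ := hD.2.1 B hB
  obtain ⟨Z, hZ, hZB, hZY⟩ :=
    Coideal.exists_mem_basic (finCond_rList hBb (Cond.refl k B) d) (hD.1 hY) hYB
  have hBd := hBA.2.1
  have hZd := hZB.2.1
  rw [length_rList] at hBd hZd
  refine ⟨Z, ⟨⟨hZ, hZB.1, ?_, hZB.2.2.trans hBb hA hBA.2.2⟩, hD.2.2 Z Y hZ hY hZY⟩, hZB.2.2⟩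
  rw [length_rList, hZd, hBd]

theorem Semiselective.sigmaDistributive (hH : Semiselective k H) : SigmaDistributive k H := by
  intro D hD A hA
  have hAb := H.blockseq A hA
  obtain ⟨B, hB, hBA, As, hAs, hdiag⟩ := hH A hA _
    (fun a _ => (hD a.length).denseOpenIn_inter hAb (depth k A a)) A hA (Cond.refl k A)
  have hBb := H.blockseq B hB
  refine ⟨B, hB, fun n => ?_, hBA.almostCond⟩
  have hmem := (hAs _ (finCond_rList hBb hBA n)).2
  rw [length_rList] at hmem
  have hBAs := hdiag _ (finCond_rList hBb (Cond.refl k B) n) (mem_basic_rList hBb n)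
  exact (hD n).2.2 B _ hB hmem hBAs.2.2.almostCond

/-- The elements of `H` that are `≤*`-below an element of `D` or `≤*`-incompatible with `A`: the
`≤*`-dense open subset of `H` generated by a set `D` which is `≤*`-dense only below `A`. -/
def starDownset (H : Coideal k) (A : ℕ → ℕ → ℕ) (D : Set (ℕ → ℕ → ℕ)) : Set (ℕ → ℕ → ℕ) :=
  {B | H.mem B ∧ ((∃ Y ∈ D, AlmostCond k B Y) ∨
    ∀ X, H.mem X → AlmostCond k X B → ¬ AlmostCond k X A)}

lemma starDenseOpen_starDownset {D : Set (ℕ → ℕ → ℕ)} (hDH : D ⊆ {Y | H.mem Y})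
    (hD : ∀ B, H.mem B → AlmostCond k B A → ∃ Y ∈ D, AlmostCond k Y B) :
    StarDenseOpen k H (starDownset H A D) := by
  have htrans : ∀ {X Y Z}, H.mem X → H.mem Y → H.mem Z → AlmostCond k X Y →
      AlmostCond k Y Z → AlmostCond k X Z := fun hX hY hZ =>
    AlmostCond.trans (H.blockseq _ hX) (H.blockseq _ hY) (H.blockseq _ hZ)
  refine ⟨fun B hB => hB.1, fun B hB => ?_, fun X Y hX hY hXY => ⟨hX, ?_⟩⟩
  · by_cases hcompat : ∃ X, H.mem X ∧ AlmostCond k X B ∧ AlmostCond k X A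
    · obtain ⟨X, hX, hXB, hXA⟩ := hcompat
      obtain ⟨Y, hY, hYX⟩ := hD X hX hXA
      exact ⟨Y, ⟨hDH hY, .inl ⟨Y, hY, (Cond.refl k Y).almostCond⟩⟩,
        htrans (hDH hY) hX hB hYX hXB⟩
    · push Not at hcompat
      exact ⟨B, ⟨hB, .inr hcompat⟩, (Cond.refl k B).almostCond⟩
  · exact hY.2.imp (fun ⟨Z, hZ, hYZ⟩ => ⟨Z, hZ, htrans hX hY.1 (hDH hZ) hXY hYZ⟩)
      fun hincompat W hW hWX => hincompat W hW (htrans hW hX hY.1 hWX hXY)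

lemma DenseOpenIn.exists_almostCond {D : Set (ℕ → ℕ → ℕ)} {d : ℕ} (hA : IsBlockSeq k A)
    (hD : DenseOpenIn k D ({B | H.mem B} ∩ Basic k (rList d A) A)) (hB : H.mem B)
    (hBA : AlmostCond k B A) : ∃ Y ∈ D, AlmostCond k Y B := by
  obtain ⟨X, hX, hXA, hXB⟩ := Coideal.exists_mem_basic (finCond_rList hA (Cond.refl k A) d) hB hBA
  obtain ⟨Y, hY, hYX⟩ := hD.2.1 X ⟨hX, hXA⟩
  exact ⟨Y, hY, hYX.almostCond.trans (H.blockseq Y (hD.1 hY).1) hXA.1 (H.blockseq B hB) hXB⟩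

lemma SigmaDistributive.exists_forall_almostCond (hH : SigmaDistributive k H) {ι : Type*}
    [Countable ι] [Nonempty ι] {D : ι → Set (ℕ → ℕ → ℕ)} (hDH : ∀ i, D i ⊆ {Y | H.mem Y})
    (hD : ∀ i B, H.mem B → AlmostCond k B A → ∃ Y ∈ D i, AlmostCond k Y B) (hC : H.mem C)
    (hA : IsBlockSeq k A) (hCA : AlmostCond k C A) :
    ∃ B, H.mem B ∧ AlmostCond k B C ∧ ∀ i, ∃ Y ∈ D i, AlmostCond k B Y := by
  obtain ⟨e, he⟩ := exists_surjective_nat ι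
  obtain ⟨B, hB, hBD, hBC⟩ := hH (fun n => starDownset H A (D (e n)))
    (fun n => starDenseOpen_starDownset (hDH _) (hD _)) C hC
  have hBA := hBC.trans (H.blockseq B hB) (H.blockseq C hC) hA hCA
  refine ⟨B, hB, hBC, fun i => ?_⟩
  obtain ⟨n, rfl⟩ := he i
  exact (hBD n).2.resolve_right fun hincompat => hincompat B hB (Cond.refl k B).almostCond hBA

theorem SigmaDistributive.semiselective (hH : SigmaDistributive k H) : Semiselective k H := by
  intro A hA D hD C hC hCA
  have hAb := H.blockseq A hA
  have hCb := H.blockseq C hC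
  have : Countable {a // FinCond k a A} := countable_setOf_finCond k A
  have : Nonempty {a // FinCond k a A} := ⟨[], finCond_nil k A⟩
  obtain ⟨B₀, hB₀, ⟨N, hN⟩, hB₀D⟩ := hH.exists_forall_almostCond
    (D := fun a : {a // FinCond k a A} => D a) (fun a Y hY => ((hD a a.2).1 hY).1)
    (fun a B => (hD a a.2).exists_almostCond hAb) hC hAb hCA.almostCond
  choose! As hAs hB₀As using fun a ha => hB₀D ⟨a, ha⟩
  have hB₁ := Coideal.mem_shift hB₀ N
  have hB₁C : Cond k (fun n => B₀ (n + N)) C := fun n => hN _ (Nat.le_add_left N n)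
  have hB₁b := H.blockseq _ hB₁
  have hB₁A := hB₁C.trans hCb hAb hCA
  have hbasic : ∀ a, FinCond k a A → As a ∈ Basic k (rList (depth k A a) A) A :=
    fun a ha => ((hD a ha).1 (hAs a ha)).2
  obtain ⟨B, hB, hBB₁, hdiag⟩ := Coideal.exists_diagonal hB₁ fun a ha =>
    have haA := ha.trans hB₁b hAb hB₁A
    ⟨(hbasic a haA).1, (cond_shift k B₀ N).almostCond.trans hB₁b (H.blockseq B₀ hB₀)
      (hbasic a haA).1 (hB₀As a haA)⟩
  have hBb := H.blockseq B hB
  refine ⟨B, hB, hBB₁.trans hB₁b hCb hB₁C, As, hAs, fun a ha X hX => ⟨hX.1, hX.2.1, fun n => ?_⟩⟩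
  rcases lt_or_ge n a.length with hn | hn
  · have haA := ha.trans hBb hAb (hBB₁.trans hB₁b hAb hB₁A)
    have hXa : X n ∈ a := by
      rw [← hX.2.1]
      exact mem_rList.2 ⟨n, hn, rfl⟩
    exact haA.inSpan_of_mem_basic_depth (hbasic a haA) hXa
  · exact hdiag a X hX n hn

/-- A coideal is semiselective iff `(H, ≤*)` is σ-distributive. -/
theorem semiselective_iff_sigma_distributive (k : ℕ) (H : Coideal k) :
    Semiselective k H ↔
    ∀ D : ℕ → Set (ℕ → ℕ → ℕ), (∀ n, StarDenseOpen k H (D n)) →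
      ∀ A, H.mem A → ∃ B, H.mem B ∧ (∀ n, B ∈ D n) ∧ AlmostCond k B A := by
  exact ⟨Semiselective.sigmaDistributive, SigmaDistributive.semiselective⟩

end FINkSpace
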